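/- Proposition 4: Let n ≥ 3 and let ψ be a pure n-qubit state satisfying the preferred-basis condition. Define s_k for 2 ≤ k ≤ n by: s_{n-1} = 2, s_{n-2} = 4, and s_k = C(n-k+1, 2) for 2 ≤ k ≤ n-3. If M(ρ_ψ) > s_k, then ψ is not k-product: there is no partition of the n qubits into k nonempty blocks over which ψ is a product of pure states. -/

import Mathlib

noncomputable def pauli : ℕ → Matrix (Fin 2) (Fin 2) ℂ
  | 1 => !![0, 1; 1, 0]
  | 2 => !![0, -Complex.I; Complex.I, 0]
  | 3 => !![1, 0; 0, -1]
  | _ => 1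

/-- The `ι`-fold Kronecker product of single-qubit operators `pauli (f k)`. -/
noncomputable def kronOp {ι : Type*} [Fintype ι] [DecidableEq ι] (f : ι → ℕ) :
    Matrix (ι → Fin 2) (ι → Fin 2) ℂ :=
  Matrix.of fun x y => ∏ k, pauli (f k) (x k) (y k)

/-- Two-body correlation `T^{kl}_{ij}(ρ)`. -/
noncomputable def corr {ι : Type*} [Fintype ι] [DecidableEq ι]
    (ρ : Matrix (ι → Fin 2) (ι → Fin 2) ℂ) (k l : ι) (i j : ℕ) : ℝ :=
  ((ρ * kronOp (fun q => if q = k then i else if q = l then j else 0)).trace).re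

/-- Single-qubit Bloch vector component `b^{(q)}_i(ρ)`. -/
noncomputable def bloch {ι : Type*} [Fintype ι] [DecidableEq ι]
    (ρ : Matrix (ι → Fin 2) (ι → Fin 2) ℂ) (q : ι) (i : ℕ) : ℝ :=
  ((ρ * kronOp (fun p => if p = q then i else 0)).trace).re

/-- `M_{kl}(ρ)`. -/
noncomputable def Mkl {ι : Type*} [Fintype ι] [DecidableEq ι]
    (ρ : Matrix (ι → Fin 2) (ι → Fin 2) ℂ) (k l : ι) : ℝ :=
  ∑ i ∈ Finset.Icc 1 2, ∑ j ∈ Finset.Icc 1 2, (corr ρ k l i j) ^ 2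

/-- `M(ρ) = Σ_{k<l} M_{kl}(ρ)`. -/
noncomputable def Mtot {ι : Type*} [Fintype ι] [LinearOrder ι]
    (ρ : Matrix (ι → Fin 2) (ι → Fin 2) ℂ) : ℝ :=
  ∑ p ∈ Finset.univ.filter (fun p : ι × ι => p.1 < p.2), Mkl ρ p.1 p.2

/-- Density matrix of a pure state `ψ`: `ρ_ψ = ψ ψ†`. -/
noncomputable def pureDensity {ι : Type*} [Fintype ι] [DecidableEq ι]
    (ψ : (ι → Fin 2) → ℂ) : Matrix (ι → Fin 2) (ι → Fin 2) ℂ :=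
  Matrix.of fun x y => ψ x * (starRingEnd ℂ) (ψ y)

/-- `ψ` is a unit vector. -/
def UnitVec {ι : Type*} [Fintype ι] [DecidableEq ι] (ψ : (ι → Fin 2) → ℂ) : Prop :=
  ∑ x, Complex.normSq (ψ x) = 1

/-- Preferred-basis condition: all transverse Bloch components vanish. -/
def PreferredBasis {ι : Type*} [Fintype ι] [DecidableEq ι]
    (ρ : Matrix (ι → Fin 2) (ι → Fin 2) ℂ) : Prop :=
  ∀ q : ι, bloch ρ q 1 = 0 ∧ bloch ρ q 2 = 0

/-- `P` is a partition of `Fin n` into `k` nonempty blocks. -/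
def IsPartition {n k : ℕ} (P : Fin k → Finset (Fin n)) : Prop :=
  (∀ m, (P m).Nonempty) ∧ (∀ m m', m ≠ m' → Disjoint (P m) (P m')) ∧
    ∀ q : Fin n, ∃ m, q ∈ P m

/-- Restriction of an `n`-bit string to a block of qubits. -/
def restrictB {n : ℕ} (S : Finset (Fin n)) (f : Fin n → Fin 2) : (↥S → Fin 2) :=
  fun q => f q.val

/-- `ψ` is the tensor product, under the canonical qubit-reordering isomorphism,
of pure states on the blocks of `P`. -/
def IsProductOver {n k : ℕ} (ψ : (Fin n → Fin 2) → ℂ) (P : Fin k → Finset (Fin n)) : Prop :=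
  ∃ φ : (m : Fin k) → ((↥(P m) → Fin 2) → ℂ),
    (∀ m, UnitVec (φ m)) ∧ ∀ f : Fin n → Fin 2, ψ f = ∏ m, φ m (restrictB (P m) f)

/-- Commutation sign of two Pauli labels. -/
def pauliSign (a b : ℕ) : ℂ := if a = b ∨ a = 0 ∨ b = 0 then 1 else -1

lemma pauli_zero : pauli 0 = 1 := rfl

lemma pauli_herm (a : ℕ) (ha : a ≤ 2) : (pauli a).conjTranspose = pauli a := by
  interval_cases a
  · simp [pauli_zero]
  · ext i j; fin_cases i <;> fin_cases j <;> simp [pauli]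
  · ext i j; fin_cases i <;> fin_cases j <;> simp [pauli]

lemma pauli_sq (a : ℕ) (ha : a ≤ 2) : pauli a * pauli a = 1 := by
  interval_cases a
  · simp [pauli_zero]
  · ext i j; fin_cases i <;> fin_cases j <;> simp [pauli, Matrix.mul_apply]
  · ext i j; fin_cases i <;> fin_cases j <;> simp [pauli, Matrix.mul_apply]

lemma pauli_comm (a b : ℕ) (ha : a ≤ 2) (hb : b ≤ 2) :
    pauli a * pauli b = pauliSign a b • (pauli b * pauli a) := by
  interval_cases a <;> interval_cases b <;> simp [pauliSign, pauli_zero] <;>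
  · ext i j; fin_cases i <;> fin_cases j <;> simp [pauli, Matrix.mul_apply]

lemma star_star_dot {κ : Type*} [Fintype κ] (u v : κ → ℂ) :
    star (star u ⬝ᵥ v) = star v ⬝ᵥ u := by
  simp only [dotProduct, star_sum, Pi.star_apply, star_mul', star_star]
  exact Finset.sum_congr rfl fun _ _ => mul_comm _ _

section kron
variable {ι : Type*} [Fintype ι] [DecidableEq ι]

lemma kron_mul_apply (f g : ι → ℕ) (x y : ι → Fin 2) :
    (kronOp f * kronOp g) x y = ∏ q, (pauli (f q) * pauli (g q)) (x q) (y q) := by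
  simp only [Matrix.mul_apply, kronOp, Matrix.of_apply, ← Finset.prod_mul_distrib]
  rw [Finset.prod_univ_sum]
  simp [Fintype.piFinset_univ]

lemma kron_sq (f : ι → ℕ) (hf : ∀ q, f q ≤ 2) : kronOp f * kronOp f = 1 := by
  ext x y
  rw [kron_mul_apply]
  simp only [pauli_sq _ (hf _), Matrix.one_apply]
  by_cases h : x = y
  · simp [h]
  · rw [if_neg h]
    obtain ⟨q, hq⟩ := Function.ne_iff.mp h
    exact Finset.prod_eq_zero (Finset.mem_univ q) (by simp [hq])

lemma kron_herm (f : ι → ℕ) (hf : ∀ q, f q ≤ 2) : (kronOp f).conjTranspose = kronOp f := by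
  ext x y
  simp only [Matrix.conjTranspose_apply, kronOp, Matrix.of_apply, star_prod]
  refine Finset.prod_congr rfl fun q _ => ?_
  rw [← Matrix.conjTranspose_apply, pauli_herm _ (hf q)]

lemma kron_comm (f g : ι → ℕ) (hf : ∀ q, f q ≤ 2) (hg : ∀ q, g q ≤ 2) :
    kronOp f * kronOp g = (∏ q, pauliSign (f q) (g q)) • (kronOp g * kronOp f) := by
  ext x y
  rw [Matrix.smul_apply, kron_mul_apply, kron_mul_apply, smul_eq_mul, ← Finset.prod_mul_distrib]
  refine Finset.prod_congr rfl fun q _ => ?_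
  rw [pauli_comm _ _ (hf q) (hg q), Matrix.smul_apply, smul_eq_mul]

/-- expectation value -/
noncomputable def expv (ψ : (ι → Fin 2) → ℂ) (f : ι → ℕ) : ℂ := (pureDensity ψ * kronOp f).trace

lemma expv_eq_dot (ψ : (ι → Fin 2) → ℂ) (f : ι → ℕ) :
    expv ψ f = star ψ ⬝ᵥ (kronOp f).mulVec ψ := by
  simp only [expv, Matrix.trace, Matrix.diag, Matrix.mul_apply, pureDensity, Matrix.of_apply,
    dotProduct, Matrix.mulVec, Finset.mul_sum]
  rw [Finset.sum_comm]
  refine Finset.sum_congr rfl fun x _ => Finset.sum_congr rfl fun y _ => ?_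
  simp only [Pi.star_apply, RCLike.star_def]
  ring

lemma dot_kron (ψ : (ι → Fin 2) → ℂ) (f g : ι → ℕ) (hf : ∀ q, f q ≤ 2) :
    star ((kronOp f).mulVec ψ) ⬝ᵥ (kronOp g).mulVec ψ = star ψ ⬝ᵥ (kronOp f * kronOp g).mulVec ψ := by
  rw [Matrix.star_mulVec, kron_herm f hf, ← Matrix.dotProduct_mulVec, Matrix.mulVec_mulVec]

lemma unit_dot (ψ : (ι → Fin 2) → ℂ) (h : UnitVec ψ) : star ψ ⬝ᵥ ψ = 1 := by
  unfold UnitVec at h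
  simp only [dotProduct, Pi.star_apply, RCLike.star_def, ← Complex.normSq_eq_conj_mul_self]
  exact_mod_cast h

lemma expv_conj (ψ : (ι → Fin 2) → ℂ) (f : ι → ℕ) (hf : ∀ q, f q ≤ 2) :
    star (expv ψ f) = expv ψ f := by
  rw [expv_eq_dot, star_star_dot, Matrix.star_mulVec, kron_herm f hf, ← Matrix.dotProduct_mulVec]

lemma bessel4 (ψ : (ι → Fin 2) → ℂ) (h : UnitVec ψ) (t : Fin 4 → ι → ℕ)
    (ht : ∀ r q, t r q ≤ 2) (hanti : ∀ r s, r < s → ∏ q, pauliSign (t r q) (t s q) = -1) :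
    ∑ r, ((expv ψ (t r)).re) ^ 2 ≤ 1 := by
  have key : ∀ r s, r < s → (star ((kronOp (t r)).mulVec ψ) ⬝ᵥ (kronOp (t s)).mulVec ψ).re = 0 := by
    intro r s hrs
    have h1 := dot_kron ψ (t r) (t s) (ht r)
    have h2 := dot_kron ψ (t s) (t r) (ht s)
    rw [kron_comm _ _ (ht r) (ht s), hanti r s hrs, neg_one_smul, Matrix.neg_mulVec,
      dotProduct_neg, ← h2] at h1
    have h3 : star (star ((kronOp (t r)).mulVec ψ) ⬝ᵥ (kronOp (t s)).mulVec ψ)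
      = star ((kronOp (t s)).mulVec ψ) ⬝ᵥ (kronOp (t r)).mulVec ψ := by
      rw [star_star_dot]
    rw [← h3] at h1
    have := congrArg Complex.re h1
    simp at this
    linarith
  have nrm : ∀ r, star ((kronOp (t r)).mulVec ψ) ⬝ᵥ (kronOp (t r)).mulVec ψ = 1 := by
    intro r
    rw [dot_kron _ _ _ (ht r), kron_sq _ (ht r), Matrix.one_mulVec, unit_dot ψ h]
  let a : Fin 4 → ℝ := fun r => (expv ψ (t r)).re
  let v : Fin 4 → (ι → Fin 2) → ℂ := fun r => (kronOp (t r)).mulVec ψ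
  have key' : ∀ r s, (star (v r) ⬝ᵥ v s).re = if r = s then 1 else 0 := by
    intro r s
    rcases lt_trichotomy r s with hrs | hrs | hrs
    · rw [if_neg hrs.ne]; exact key r s hrs
    · subst hrs; simp [v, nrm]
    · rw [if_neg hrs.ne', ← key s r hrs]
      have : star (star (v s) ⬝ᵥ v r) = star (v r) ⬝ᵥ v s := by
        rw [star_star_dot]
      rw [← this]; rfl
  let w : (ι → Fin 2) → ℂ := ψ - ∑ r, (a r : ℂ) • v r
  have hw : 0 ≤ (star w ⬝ᵥ w).re := by
    have : star w ⬝ᵥ w = ((∑ x, Complex.normSq (w x) : ℝ) : ℂ) := by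
      simp only [dotProduct, Pi.star_apply, RCLike.star_def, ← Complex.normSq_eq_conj_mul_self]
      push_cast; rfl
    rw [this, Complex.ofReal_re]
    exact Finset.sum_nonneg fun x _ => Complex.normSq_nonneg _
  have e1 : ∀ r, (star ψ ⬝ᵥ v r).re = a r := fun r => by simp only [a, expv_eq_dot, v]
  have e2 : ∀ r, (star (v r) ⬝ᵥ ψ).re = a r := fun r => by
    have : star (star ψ ⬝ᵥ v r) = star (v r) ⬝ᵥ ψ := by
      rw [star_star_dot]
    rw [← this, ← e1 r]; rfl
  have hexp : (star w ⬝ᵥ w).re = 1 - ∑ r, a r ^ 2 := by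
    have hu := congrArg Complex.re (unit_dot ψ h)
    simp only [w, star_sub, star_sum, star_smul, sub_dotProduct, dotProduct_sub, sum_dotProduct,
      dotProduct_sum, smul_dotProduct, dotProduct_smul, Complex.sub_re, Complex.re_sum,
      smul_eq_mul, RCLike.star_def, Complex.conj_ofReal, Complex.re_ofReal_mul, e1, e2, hu, key']
    simp
    simp [pow_two]
  have : ∑ r, a r ^ 2 ≤ 1 := by linarith
  exact this

/-- two-site label -/
def lab2 (k l : ι) (i j : ℕ) : ι → ℕ := fun q => if q = k then i else if q = l then j else 0

lemma corr_eq (ψ : (ι → Fin 2) → ℂ) (k l : ι) (i j : ℕ) :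
    corr (pureDensity ψ) k l i j = (expv ψ (lab2 k l i j)).re := rfl

lemma lab2_le (k l : ι) (i j : ℕ) (hi : i ≤ 2) (hj : j ≤ 2) (q : ι) : lab2 k l i j q ≤ 2 := by
  unfold lab2; split_ifs <;> omega

lemma lab2_symm (k l : ι) (h : k ≠ l) (i j : ℕ) : lab2 k l i j = lab2 l k j i := by
  funext q; unfold lab2
  split_ifs <;> simp_all

lemma Mkl_expand (ψ : (ι → Fin 2) → ℂ) (k l : ι) : Mkl (pureDensity ψ) k l =
    (expv ψ (lab2 k l 1 1)).re ^ 2 + (expv ψ (lab2 k l 1 2)).re ^ 2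
    + (expv ψ (lab2 k l 2 1)).re ^ 2 + (expv ψ (lab2 k l 2 2)).re ^ 2 := by
  have : Finset.Icc 1 2 = ({1, 2} : Finset ℕ) := by decide
  simp only [Mkl, this, corr_eq]
  simp
  ring

lemma Mkl_symm (ψ : (ι → Fin 2) → ℂ) (k l : ι) (h : k ≠ l) :
    Mkl (pureDensity ψ) k l = Mkl (pureDensity ψ) l k := by
  rw [Mkl_expand, Mkl_expand, lab2_symm k l h, lab2_symm k l h, lab2_symm k l h, lab2_symm k l h]
  ring

lemma Mkl_nonneg (ρ : Matrix (ι → Fin 2) (ι → Fin 2) ℂ) (k l : ι) : 0 ≤ Mkl ρ k l :=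
  Finset.sum_nonneg fun _ _ => Finset.sum_nonneg fun _ _ => sq_nonneg _

lemma sign_prod_one (f g : ι → ℕ) (x : ι) (hx : pauliSign (f x) (g x) = -1)
    (hne : ∀ q, q ≠ x → pauliSign (f q) (g q) = 1) : ∏ q, pauliSign (f q) (g q) = -1 := by
  rw [Finset.prod_eq_single x (fun q _ hq => hne q hq) (by simp), hx]

/-- same first label, different second label -/
lemma sign_same (k l : ι) (h : k ≠ l) (i : ℕ) :
    ∏ q, pauliSign (lab2 k l i 1 q) (lab2 k l i 2 q) = -1 := by
  apply sign_prod_one _ _ l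
  · simp [lab2, h.symm, pauliSign]
  · intro q hq
    by_cases hk : q = k <;> simp [lab2, hq, hk, pauliSign]

lemma sign_diff (k l m : ι) (hl : k ≠ l) (hm : k ≠ m) (hlm : l ≠ m) (i i' j j' : ℕ)
    (hi : i ≠ i') (h0 : i ≠ 0) (h0' : i' ≠ 0) :
    ∏ q, pauliSign (lab2 k l i j q) (lab2 k m i' j' q) = -1 := by
  apply sign_prod_one _ _ k
  · simp [lab2, pauliSign, hi, h0, h0']
  · intro q hq
    by_cases hql : q = l
    · subst hql
      simp [lab2, hq, hlm, pauliSign]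
    · simp [lab2, hq, hql, pauliSign]

lemma half_cherry (ψ : (ι → Fin 2) → ℂ) (h : UnitVec ψ) (k l m : ι) (hl : k ≠ l) (hm : k ≠ m)
    (hlm : l ≠ m) (i i' : ℕ) (hii : i ≠ i') (hi0 : i ≠ 0) (hi0' : i' ≠ 0)
    (hi : i ≤ 2) (hi' : i' ≤ 2) :
    (expv ψ (lab2 k l i 1)).re ^ 2 + (expv ψ (lab2 k l i 2)).re ^ 2
    + (expv ψ (lab2 k m i' 1)).re ^ 2 + (expv ψ (lab2 k m i' 2)).re ^ 2 ≤ 1 := by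
  have := bessel4 ψ h ![lab2 k l i 1, lab2 k l i 2, lab2 k m i' 1, lab2 k m i' 2]
    (by
      intro r q
      fin_cases r
      · exact lab2_le _ _ _ _ hi (by norm_num) q
      · exact lab2_le _ _ _ _ hi (by norm_num) q
      · exact lab2_le _ _ _ _ hi' (by norm_num) q
      · exact lab2_le _ _ _ _ hi' (by norm_num) q)
    (by
      intro r s hrs
      fin_cases r <;> fin_cases s <;> first | (exfalso; revert hrs; decide) | skip
      · exact sign_same k l hl i
      · exact sign_diff k l m hl hm hlm _ _ _ _ hii hi0 hi0'
      · exact sign_diff k l m hl hm hlm _ _ _ _ hii hi0 hi0'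
      · exact sign_diff k l m hl hm hlm _ _ _ _ hii hi0 hi0'
      · exact sign_diff k l m hl hm hlm _ _ _ _ hii hi0 hi0'
      · exact sign_same k m hm i')
  simpa [Fin.sum_univ_four] using this

lemma cherry (ψ : (ι → Fin 2) → ℂ) (h : UnitVec ψ) (k l m : ι) (hl : k ≠ l) (hm : k ≠ m)
    (hlm : l ≠ m) : Mkl (pureDensity ψ) k l + Mkl (pureDensity ψ) k m ≤ 2 := by
  have h1 := half_cherry ψ h k l m hl hm hlm 1 2 (by norm_num) (by norm_num) (by norm_num)
    (by norm_num) (by norm_num)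
  have h2 := half_cherry ψ h k l m hl hm hlm 2 1 (by norm_num) (by norm_num) (by norm_num)
    (by norm_num) (by norm_num)
  rw [Mkl_expand, Mkl_expand]
  linarith

/-- independence of functions of complementary coordinates -/
lemma indep_sum (S : Finset ι) (F G : (ι → Fin 2) → (ι → Fin 2) → ℂ)
    (hF : ∀ f g f' g', (∀ q ∈ S, f q = f' q) → (∀ q ∈ S, g q = g' q) → F f g = F f' g')
    (hG : ∀ f g f' g', (∀ q ∉ S, f q = f' q) → (∀ q ∉ S, g q = g' q) → G f g = G f' g') :
    (∑ p : (ι → Fin 2) × (ι → Fin 2), F p.1 p.2 * G p.1 p.2)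
      * (Fintype.card ((ι → Fin 2) × (ι → Fin 2)) : ℂ)
    = (∑ p : (ι → Fin 2) × (ι → Fin 2), F p.1 p.2)
      * (∑ p : (ι → Fin 2) × (ι → Fin 2), G p.1 p.2) := by
  rw [Finset.sum_mul_sum]
  have : (Fintype.card ((ι → Fin 2) × (ι → Fin 2)) : ℂ)
    = ∑ _p : (ι → Fin 2) × (ι → Fin 2), 1 := by simp
  rw [this, Finset.sum_mul_sum]
  simp only [mul_one]
  rw [← Finset.sum_product', ← Finset.sum_product']
  let sw : ((ι → Fin 2) × (ι → Fin 2)) × ((ι → Fin 2) × (ι → Fin 2)) →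
      ((ι → Fin 2) × (ι → Fin 2)) × ((ι → Fin 2) × (ι → Fin 2)) := fun p =>
    ((S.piecewise p.1.1 p.2.1, S.piecewise p.1.2 p.2.2),
     (S.piecewise p.2.1 p.1.1, S.piecewise p.2.2 p.1.2))
  have hsw : ∀ p, sw (sw p) = p := by
    rintro ⟨⟨a, b⟩, ⟨c, d⟩⟩
    simp only [sw, Prod.mk.injEq]
    refine ⟨⟨?_, ?_⟩, ?_, ?_⟩ <;>
    · funext q; by_cases hq : q ∈ S <;> simp [Finset.piecewise, hq]
  refine Finset.sum_nbij' sw sw (by simp) (by simp) (fun p _ => hsw p) (fun p _ => hsw p) ?_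
  rintro ⟨⟨a, b⟩, ⟨c, d⟩⟩ _
  simp only [sw]
  congr 1
  · apply hF <;> intro q hq <;> simp [Finset.piecewise, hq]
  · apply hG <;> intro q hq <;> simp [Finset.piecewise, hq]

lemma expv_factor (ψ α β : (ι → Fin 2) → ℂ) (S : Finset ι) (hψ : ∀ f, ψ f = α f * β f)
    (hα : ∀ f f', (∀ q ∈ S, f q = f' q) → α f = α f')
    (hβ : ∀ f f', (∀ q ∉ S, f q = f' q) → β f = β f') :
    ∃ A B : (ι → ℕ) → ℂ, (∀ t t', (∀ q ∈ S, t q = t' q) → A t = A t') ∧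
      (∀ t t', (∀ q ∉ S, t q = t' q) → B t = B t') ∧
      ∀ t, expv ψ t * (Fintype.card ((ι → Fin 2) × (ι → Fin 2)) : ℂ) = A t * B t := by
  refine ⟨fun t => ∑ p : (ι → Fin 2) × (ι → Fin 2),
      α p.1 * star (α p.2) * ∏ q ∈ S, pauli (t q) (p.2 q) (p.1 q),
    fun t => ∑ p : (ι → Fin 2) × (ι → Fin 2),
      β p.1 * star (β p.2) * ∏ q ∈ Sᶜ, pauli (t q) (p.2 q) (p.1 q), ?_, ?_, ?_⟩
  · intro t t' h
    refine Finset.sum_congr rfl fun p _ => ?_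
    congr 1
    exact Finset.prod_congr rfl fun q hq => by rw [h q hq]
  · intro t t' h
    refine Finset.sum_congr rfl fun p _ => ?_
    congr 1
    exact Finset.prod_congr rfl fun q hq => by rw [h q (by simpa using hq)]
  · intro t
    rw [← indep_sum S
      (fun f g => α f * star (α g) * ∏ q ∈ S, pauli (t q) (g q) (f q))
      (fun f g => β f * star (β g) * ∏ q ∈ Sᶜ, pauli (t q) (g q) (f q))]
    · congr 1
      simp only [expv, Matrix.trace, Matrix.diag, Matrix.mul_apply, pureDensity, Matrix.of_apply,
        kronOp]
      rw [Fintype.sum_prod_type]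
      refine Finset.sum_congr rfl fun f _ => Finset.sum_congr rfl fun g _ => ?_
      rw [← Finset.prod_mul_prod_compl S, hψ, hψ]
      simp only [map_mul, RCLike.star_def]
      ring
    · intro f g f' g' h1 h2
      rw [hα f f' h1, hα g g' h2]
      congr 1
      exact Finset.prod_congr rfl fun q hq => by rw [h1 q hq, h2 q hq]
    · intro f g f' g' h1 h2
      rw [hβ f f' h1, hβ g g' h2]
      congr 1
      exact Finset.prod_congr rfl fun q hq => by
        rw [h1 q (by simpa using hq), h2 q (by simpa using hq)]

lemma expv_zero (ψ : (ι → Fin 2) → ℂ) (h : UnitVec ψ) : expv ψ (fun _ => 0) = 1 := by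
  have : kronOp (fun _ : ι => 0) = 1 := by
    have := kron_sq (fun _ : ι => 0) (by simp)
    ext x y
    simp only [kronOp, Matrix.of_apply, pauli_zero, Matrix.one_apply]
    by_cases h : x = y
    · simp [h]
    · rw [if_neg h]
      obtain ⟨q, hq⟩ := Function.ne_iff.mp h
      exact Finset.prod_eq_zero (Finset.mem_univ q) (by simp [hq])
  rw [expv_eq_dot, this, Matrix.one_mulVec, unit_dot ψ h]

lemma expv_bloch (ψ : (ι → Fin 2) → ℂ) (hpb : PreferredBasis (pureDensity ψ)) (k : ι) (i : ℕ)
    (hi : i = 1 ∨ i = 2) : expv ψ (fun p => if p = k then i else 0) = 0 := by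
  apply Complex.ext
  · rcases hi with rfl | rfl
    · exact (hpb k).1
    · exact (hpb k).2
  · have := expv_conj ψ (fun p => if p = k then i else 0)
      (by intro q; split_ifs <;> omega)
    have := congrArg Complex.im this
    simp at this
    simp
    linarith

lemma cross_zero (ψ α β : (ι → Fin 2) → ℂ) (S : Finset ι) (h : UnitVec ψ)
    (hpb : PreferredBasis (pureDensity ψ)) (hψ : ∀ f, ψ f = α f * β f)
    (hα : ∀ f f', (∀ q ∈ S, f q = f' q) → α f = α f')
    (hβ : ∀ f f', (∀ q ∉ S, f q = f' q) → β f = β f') (k l : ι) (hk : k ∈ S) (hl : l ∉ S) :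
    Mkl (pureDensity ψ) k l = 0 := by
  obtain ⟨A, B, hA, hB, hAB⟩ := expv_factor ψ α β S hψ hα hβ
  have hN : (Fintype.card ((ι → Fin 2) × (ι → Fin 2)) : ℂ) ≠ 0 := by
    exact_mod_cast Fintype.card_ne_zero
  have main : ∀ i j, (i = 1 ∨ i = 2) → expv ψ (lab2 k l i j) = 0 := by
    intro i j hi
    have h1 := hAB (fun p => if p = k then i else 0)
    have h0 := hAB (fun _ => 0)
    have h2 := hAB (lab2 k l i j)
    rw [expv_bloch ψ hpb k i hi, zero_mul] at h1
    rw [expv_zero ψ h, one_mul] at h0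
    have e1 : B (fun p => if p = k then i else 0) = B (fun _ => 0) := by
      apply hB; intro q hq
      have : q ≠ k := fun h => hq (h ▸ hk)
      simp [this]
    have e2 : A (lab2 k l i j) = A (fun p => if p = k then i else 0) := by
      apply hA; intro q hq
      have : q ≠ l := fun h => hl (h ▸ hq)
      simp [lab2, this]
    have hB0 : B (fun _ => 0) ≠ 0 := by
      intro hb; rw [hb, mul_zero] at h0; exact hN h0
    have hA0 : A (fun p => if p = k then i else 0) = 0 := by
      rw [e1] at h1
      rcases mul_eq_zero.mp h1.symm with h' | h'
      · exact h'
      · exact absurd h' hB0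
    rw [e2, hA0, zero_mul] at h2
    rcases mul_eq_zero.mp h2 with h' | h'
    · exact h'
    · exact absurd h' hN
  rw [Mkl_expand]
  simp [main]

end kron

/-- twice the bound on a block of size `d+1` -/
def Hb (d : ℕ) : ℕ := if d = 1 then 4 else if d = 2 then 8 else d * (d + 1)

lemma Hb_super (a b : ℕ) : Hb a + Hb b ≤ Hb (a + b) := by
  unfold Hb
  rcases Nat.lt_or_ge a 3 with ha | ha <;> rcases Nat.lt_or_ge b 3 with hb | hb
  · interval_cases a <;> interval_cases b <;> simp
  · interval_cases a <;> split_ifs <;> simp_all <;> first | omega | nlinarith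
  · interval_cases b <;> split_ifs <;> simp_all <;> first | omega | nlinarith
  · split_ifs <;> first | omega | nlinarith

lemma Hb_sum {κ : Type*} (s : Finset κ) (d : κ → ℕ) : ∑ m ∈ s, Hb (d m) ≤ Hb (∑ m ∈ s, d m) := by
  classical
  induction s using Finset.induction_on with
  | empty => simp
  | insert a s ha ih =>
    rw [Finset.sum_insert ha, Finset.sum_insert ha]
    exact le_trans (by omega) (Hb_super _ _)

lemma sum_le_card_of_pair {κ : Type*} [DecidableEq κ] (s : Finset κ) (w : κ → ℝ)
    (hs : 2 ≤ s.card) (hw : ∀ a ∈ s, ∀ b ∈ s, a ≠ b → w a + w b ≤ 2) : ∑ a ∈ s, w a ≤ s.card := by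
  by_cases hall : ∀ a ∈ s, w a ≤ 1
  · simpa using Finset.sum_le_sum hall
  · push Not at hall
    obtain ⟨a, ha, h1⟩ := hall
    obtain ⟨b, hb, hba⟩ := Finset.exists_mem_ne (s := s) (by omega) a
    have hb' : b ∈ s.erase a := Finset.mem_erase.mpr ⟨hba, hb⟩
    rw [← Finset.add_sum_erase s w ha, ← Finset.add_sum_erase _ w hb']
    have : ∑ c ∈ (s.erase a).erase b, w c ≤ ∑ c ∈ (s.erase a).erase b, (1 : ℝ) := by
      refine Finset.sum_le_sum fun c hc => ?_
      simp only [Finset.mem_erase] at hc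
      have := hw a ha c hc.2.2 (Ne.symm hc.2.1)
      linarith
    have h2 := hw a ha b hb hba.symm
    have hc : (((s.erase a).erase b).card : ℝ) = s.card - 2 := by
      rw [Finset.card_erase_of_mem hb', Finset.card_erase_of_mem ha, Nat.sub_sub,
        Nat.cast_sub hs]
      norm_num
    rw [Finset.sum_const, nsmul_eq_mul, mul_one, hc] at this
    linarith

lemma block_bound {ι : Type*} [Fintype ι] [DecidableEq ι] (ψ : (ι → Fin 2) → ℂ) (h : UnitVec ψ)
    (hpair : ∀ k l : ι, k ≠ l → Mkl (pureDensity ψ) k l ≤ 2)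
    (S : Finset ι) (hS : S.Nonempty) :
    ∑ k ∈ S, ∑ l ∈ S.erase k, Mkl (pureDensity ψ) k l ≤ Hb (S.card - 1) := by
  have hpos := hS.card_pos
  rcases Nat.lt_or_ge S.card 3 with hc | hc
  · have row : ∀ k ∈ S, ∑ l ∈ S.erase k, Mkl (pureDensity ψ) k l ≤ ((S.card - 1 : ℕ) : ℝ) * 2 := by
      intro k hk
      have := Finset.sum_le_card_nsmul (S.erase k) (fun l => Mkl (pureDensity ψ) k l) 2
        (fun l hl => hpair k l (Finset.ne_of_mem_erase hl).symm)
      rwa [Finset.card_erase_of_mem hk, nsmul_eq_mul] at this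
    have := Finset.sum_le_card_nsmul S _ _ row
    rw [nsmul_eq_mul] at this
    refine this.trans ?_
    generalize S.card = c at *
    interval_cases c <;> norm_num [Hb]
  · have row : ∀ k ∈ S, ∑ l ∈ S.erase k, Mkl (pureDensity ψ) k l ≤ ((S.card - 1 : ℕ) : ℝ) := by
      intro k hk
      rw [← Finset.card_erase_of_mem hk]
      refine sum_le_card_of_pair _ _ (by rw [Finset.card_erase_of_mem hk]; omega) ?_
      intro a ha b hb hab
      exact cherry ψ h k a b (Finset.ne_of_mem_erase ha).symm (Finset.ne_of_mem_erase hb).symm hab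
    have := Finset.sum_le_card_nsmul S _ _ row
    rw [nsmul_eq_mul] at this
    refine this.trans ?_
    obtain ⟨c, hc'⟩ : ∃ c, S.card = c + 1 := ⟨S.card - 1, by omega⟩
    rw [hc'] at hc ⊢
    have : (c + 1) * c ≤ Hb c := by
      unfold Hb; split_ifs with h1 h2
      · subst h1; norm_num
      · subst h2; norm_num
      · exact le_of_eq (mul_comm _ _)
    simpa using (by exact_mod_cast this : (((c + 1 : ℕ) : ℝ) * (c : ℝ)) ≤ Hb c)

lemma two_Mtot {n : ℕ} (ψ : (Fin n → Fin 2) → ℂ) :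
    2 * Mtot (pureDensity ψ) = ∑ k, ∑ l ∈ Finset.univ.erase k, Mkl (pureDensity ψ) k l := by
  have h1 : ∑ k, ∑ l ∈ Finset.univ.erase k, Mkl (pureDensity ψ) k l
      = ∑ p : Fin n × Fin n, ((if p.1 < p.2 then Mkl (pureDensity ψ) p.1 p.2 else 0)
        + (if p.2 < p.1 then Mkl (pureDensity ψ) p.1 p.2 else 0)) := by
    rw [Fintype.sum_prod_type]
    refine Finset.sum_congr rfl fun k _ => ?_
    rw [← Finset.sum_subset (Finset.subset_univ (Finset.univ.erase k))]
    · refine Finset.sum_congr rfl fun l hl => ?_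
      rcases lt_or_gt_of_ne (Finset.ne_of_mem_erase hl) with h | h
      · simp [h, h.le, not_lt.mpr h.le]
      · simp [h, not_lt.mpr h.le]
    · intro l _ hl
      have : l = k := by simpa using hl
      simp [this]
  have h2 : ∑ p : Fin n × Fin n, (if p.2 < p.1 then Mkl (pureDensity ψ) p.1 p.2 else 0)
      = ∑ p : Fin n × Fin n, (if p.1 < p.2 then Mkl (pureDensity ψ) p.1 p.2 else 0) := by
    refine Fintype.sum_equiv (Equiv.prodComm _ _) _ _ ?_
    rintro ⟨a, b⟩
    change (if b < a then Mkl (pureDensity ψ) a b else 0)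
      = (if b < a then Mkl (pureDensity ψ) b a else 0)
    by_cases h : b < a
    · rw [if_pos h, if_pos h]
      exact Mkl_symm ψ a b h.ne'
    · rw [if_neg h, if_neg h]
  rw [h1, Finset.sum_add_distrib, h2, Mtot, Finset.sum_filter]
  ring

theorem not_kproduct_of_Mtot_gt (n : ℕ) (hn : 3 ≤ n)
    (ψ : (Fin n → Fin 2) → ℂ) (hψ : UnitVec ψ)
    (hpb : PreferredBasis (pureDensity ψ))
    (k : ℕ) (hk2 : 2 ≤ k) (hkn : k ≤ n)
    (hM : Mtot (pureDensity ψ)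
      > (if k = n - 1 then 2 else if k = n - 2 then 4
          else ((n - k + 1).choose 2 : ℝ))) :
    ¬ ∃ P : Fin k → Finset (Fin n), IsPartition P ∧ IsProductOver ψ P := by
  rintro ⟨P, ⟨hne, hdisj, hcov⟩, φ, _, hprod⟩
  have hpair : ∀ a b : Fin n, a ≠ b → Mkl (pureDensity ψ) a b ≤ 2 := by
    intro a b hab
    obtain ⟨c, hc⟩ : ∃ c : Fin n, c ∉ ({a, b} : Finset (Fin n)) := by
      by_contra hcon
      push Not at hcon
      have h1 : (Finset.univ : Finset (Fin n)) ⊆ {a, b} := fun c _ => hcon c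
      have h2 := Finset.card_le_card h1
      have h3 := Finset.card_le_two (a := a) (b := b)
      simp at h2
      omega
    simp only [Finset.mem_insert, Finset.mem_singleton, not_or] at hc
    have := cherry ψ hψ a b c hab (Ne.symm hc.1) (Ne.symm hc.2)
    have := Mkl_nonneg (pureDensity ψ) a c
    linarith
  have hcross : ∀ m, ∀ a ∈ P m, ∀ b ∉ P m, Mkl (pureDensity ψ) a b = 0 := by
    intro m a ha b hb
    refine cross_zero ψ (fun f => φ m (restrictB (P m) f))
      (fun f => ∏ m' ∈ Finset.univ.erase m, φ m' (restrictB (P m') f)) (P m) hψ hpb ?_ ?_ ?_ a b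
      ha hb
    · intro f
      rw [hprod f, Finset.mul_prod_erase _ (fun m' => φ m' (restrictB (P m') f))
        (Finset.mem_univ m)]
    · intro f f' hf
      have : restrictB (P m) f = restrictB (P m) f' := by
        funext q; exact hf q.1 q.2
      simp only [this]
    · intro f f' hf
      refine Finset.prod_congr rfl fun m' hm' => ?_
      have : restrictB (P m') f = restrictB (P m') f' := by
        funext q
        exact hf q.1 (Finset.disjoint_left.mp (hdisj m' m (Finset.ne_of_mem_erase hm')) q.2)
      rw [this]
  have hunion : (Finset.univ : Finset (Fin n)) = Finset.univ.biUnion P := by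
    ext q; simpa using hcov q
  have hpd : Set.PairwiseDisjoint (↑(Finset.univ : Finset (Fin k))) P :=
    fun a _ b _ hab => hdisj a b hab
  have hcard : n = ∑ m, (P m).card := by
    rw [← Finset.card_biUnion hpd, ← hunion]; simp
  have hd : ∑ m, ((P m).card - 1) = n - k := by
    have : ∑ m, (P m).card = ∑ m, ((P m).card - 1) + k := by
      have : ∑ m, ((P m).card - 1) + k = ∑ m, ((P m).card - 1) + ∑ m : Fin k, 1 := by simp
      rw [this, ← Finset.sum_add_distrib]
      refine Finset.sum_congr rfl fun m _ => ?_
      have := (hne m).card_pos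
      omega
    omega
  have hbound : 2 * Mtot (pureDensity ψ) ≤ Hb (n - k) := by
    rw [two_Mtot]
    conv_lhs => rw [hunion]
    rw [Finset.sum_biUnion hpd]
    calc _ = ∑ m, ∑ a ∈ P m, ∑ l ∈ (P m).erase a, Mkl (pureDensity ψ) a l := by
          refine Finset.sum_congr rfl fun m _ => Finset.sum_congr rfl fun a ha => ?_
          rw [← hunion]
          symm
          refine Finset.sum_subset (Finset.erase_subset_erase _ (Finset.subset_univ _)) ?_
          intro b hb hb'
          apply hcross m a ha b
          intro hbm
          exact hb' (Finset.mem_erase.mpr ⟨Finset.ne_of_mem_erase hb, hbm⟩)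
      _ ≤ ∑ m, (Hb ((P m).card - 1) : ℝ) :=
          Finset.sum_le_sum fun m _ => block_bound ψ hψ hpair (P m) (hne m)
      _ ≤ Hb (n - k) := by
          rw [← hd]
          exact_mod_cast Hb_sum Finset.univ fun m => (P m).card - 1
  split_ifs at hM with h1 h2
  · have : n - k = 1 := by omega
    rw [this] at hbound
    norm_num [Hb] at hbound
    linarith
  · have : n - k = 2 := by omega
    rw [this] at hbound
    norm_num [Hb] at hbound
    linarith
  · rw [Nat.cast_choose_two] at hM
    unfold Hb at hbound
    rw [if_neg (by omega), if_neg (by omega)] at hbound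
    push_cast at hbound hM
    linarith
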